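/- There exists a constant C > 0 such that for all 0 ≤ s ≤ t and all x, y ∈ [0,1], ∫₀ᵗ ∫₀¹ (G_{t−r}(x,z) − G_{s−r}(y,z))² dz dr ≤ C (|t−s|^{1/4} + |x−y|^{1/2})². -/

import Mathlib

/-!
By orthogonality of the functions `sin (nπz)` on `[0,1]`, the inner integral equals
`2 ∑ aₙ(r)²`, where `aₙ(r)` is the `n`-th sine coefficient of the difference of the two kernels
(`hasSum_diffCoeff_sq`). Write `λ = π²n²`. For `r < s`,
`aₙ(r) = e^{-λ(s-r)} (e^{-λ(t-s)} sin (nπx) - sin (nπy))`, while for `s ≤ r ≤ t` only the first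
kernel survives and `|aₙ(r)| ≤ e^{-λ(t-r)}`. Integrating in `r`, with `1 - e^{-v} ≤ min 1 v` and
the Lipschitz bound for the sine, each mode contributes at most a constant times
`min (1/n²) (t-s) + min (1/n²) |x-y|²` (`lintegral_diffCoeff_sq_le`).

Finally `∑ min (1/n²) δ² ≤ 4δ`, by comparison with a telescoping sum (`sum_modeMin_le`); taking
`δ = √(t-s)` and `δ = |x-y|` gives `16 √(t-s) + 8 |x-y|`, which the right-hand side dominates
with `C = 16`. Interchanges of sum and integral in `r` are done with the Lebesgue integral in
`ℝ≥0∞`, so that no integrability in `r` has to be proved.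
-/

open Real MeasureTheory Set

/-- The Dirichlet heat kernel on `[0,1]`:
`G t x y = ∑_{n=1}^∞ 2 e^{−π²n²t} sin(nπx) sin(nπy)` for `t > 0`, and `0` for `t ≤ 0`. -/
noncomputable def G (t x y : ℝ) : ℝ :=
  if 0 < t then
    ∑' n : ℕ, 2 * Real.exp (-(Real.pi ^ 2) * ((n : ℝ) + 1) ^ 2 * t)
      * Real.sin (((n : ℝ) + 1) * Real.pi * x) * Real.sin (((n : ℝ) + 1) * Real.pi * y)
  else 0

/-! ### Parseval's identity for absolutely convergent sine series -/

lemma integral_cos_int_mul_pi (k : ℤ) (hk : k ≠ 0) :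
    ∫ z in (0 : ℝ)..1, Real.cos ((k : ℝ) * π * z) = 0 := by
  have hc : (k : ℝ) * π ≠ 0 := mul_ne_zero (by exact_mod_cast hk) Real.pi_ne_zero
  rw [intervalIntegral.integral_comp_mul_left _ hc, integral_cos]
  simp [Real.sin_int_mul_pi]

lemma integral_sin_mul_sin (m n : ℕ) :
    ∫ z in (0 : ℝ)..1, Real.sin (((n : ℝ) + 1) * π * z) * Real.sin (((m : ℝ) + 1) * π * z)
      = if n = m then 1 / 2 else 0 := by
  have h : ∀ z : ℝ, Real.sin (((n : ℝ) + 1) * π * z) * Real.sin (((m : ℝ) + 1) * π * z)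
      = (1 / 2) * (Real.cos ((((n : ℤ) - m : ℤ) : ℝ) * π * z)
        - Real.cos ((((n : ℤ) + m + 2 : ℤ) : ℝ) * π * z)) := by
    intro z
    have := Real.two_mul_sin_mul_sin (((n : ℝ) + 1) * π * z) (((m : ℝ) + 1) * π * z)
    push_cast
    rw [show ((n : ℝ) - m) * π * z = ((n : ℝ) + 1) * π * z - ((m : ℝ) + 1) * π * z by ring,
      show ((n : ℝ) + m + 2) * π * z = ((n : ℝ) + 1) * π * z + ((m : ℝ) + 1) * π * z by ring]
    linarith
  simp_rw [h]
  rw [intervalIntegral.integral_const_mul, intervalIntegral.integral_sub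
    (Continuous.intervalIntegrable (by fun_prop) _ _)
    (Continuous.intervalIntegrable (by fun_prop) _ _),
    integral_cos_int_mul_pi ((n : ℤ) + m + 2) (by omega)]
  split_ifs with hnm
  · simp [hnm]
  · rw [integral_cos_int_mul_pi ((n : ℤ) - m) (by omega)]
    simp

/-- Termwise integration of an absolutely convergent sine series against a bounded continuous
function. -/
lemma hasSum_integral_sine_series (a : ℕ → ℝ) (ha : Summable fun n => |a n|)
    (φ : ℝ → ℝ) (hφ : Continuous φ) (M : ℝ) (hM : ∀ z, |φ z| ≤ M) :
    HasSum (fun n => a n * ∫ z in (0 : ℝ)..1, Real.sin (((n : ℝ) + 1) * π * z) * φ z)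
      (∫ z in (0 : ℝ)..1, (∑' n, a n * Real.sin (((n : ℝ) + 1) * π * z)) * φ z) := by
  simp_rw [← intervalIntegral.integral_const_mul]
  have hb : ∀ (n : ℕ) (z : ℝ), |a n * Real.sin (((n : ℝ) + 1) * π * z)| ≤ |a n| := by
    intro n z
    rw [abs_mul]
    exact mul_le_of_le_one_right (abs_nonneg _) (Real.abs_sin_le_one _)
  refine intervalIntegral.hasSum_integral_of_dominated_convergence (fun n _ => |a n| * M)
    (fun n => ?_) (fun n => ?_) ?_ ?_ ?_
  · exact Continuous.aestronglyMeasurable (by fun_prop)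
  · refine Filter.Eventually.of_forall fun z _ => ?_
    rw [← mul_assoc, Real.norm_eq_abs, abs_mul]
    exact mul_le_mul (hb n z) (hM z) (abs_nonneg _) (abs_nonneg _)
  · exact Filter.Eventually.of_forall fun z _ => ha.mul_right M
  · exact intervalIntegrable_const
  · refine Filter.Eventually.of_forall fun z _ => ?_
    simp_rw [← mul_assoc]
    exact (Summable.of_norm_bounded ha (fun n => hb n z)).hasSum.mul_right (φ z)

/-- Parseval's identity for an absolutely convergent sine series. -/
lemma hasSum_sq_sine_series (a : ℕ → ℝ) (ha : Summable fun n => |a n|) :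
    HasSum (fun n => 2 * a n ^ 2)
      (∫ z in (0 : ℝ)..1, (∑' n, 2 * a n * Real.sin (((n : ℝ) + 1) * π * z)) ^ 2) := by
  have ha2 : Summable fun n => |2 * a n| := by
    simpa [abs_mul] using ha.mul_left 2
  have hb : ∀ (n : ℕ) (z : ℝ), ‖2 * a n * Real.sin (((n : ℝ) + 1) * π * z)‖ ≤ |2 * a n| := by
    intro n z
    rw [Real.norm_eq_abs, abs_mul]
    exact mul_le_of_le_one_right (abs_nonneg _) (Real.abs_sin_le_one _)
  have hcont : Continuous fun z : ℝ => ∑' n, 2 * a n * Real.sin (((n : ℝ) + 1) * π * z) :=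
    continuous_tsum (fun n => by fun_prop) ha2 hb
  have hbd : ∀ z : ℝ, |∑' n, 2 * a n * Real.sin (((n : ℝ) + 1) * π * z)| ≤ ∑' n, |2 * a n| :=
    fun z => tsum_of_norm_bounded ha2.hasSum (fun n => hb n z)
  have hcoef : ∀ m : ℕ, ∫ z in (0 : ℝ)..1, Real.sin (((m : ℝ) + 1) * π * z)
      * (∑' n, 2 * a n * Real.sin (((n : ℝ) + 1) * π * z)) = a m := by
    intro m
    have h := hasSum_integral_sine_series (fun n => 2 * a n) ha2
      (fun z => Real.sin (((m : ℝ) + 1) * π * z)) (by fun_prop) 1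
      (fun z => Real.abs_sin_le_one _)
    simp_rw [integral_sin_mul_sin] at h
    have h' := hasSum_single (f := fun n => 2 * a n * if n = m then (1 / 2 : ℝ) else 0) m
      (fun n hn => by simp [hn])
    have := h.unique h'
    simp_rw [mul_comm (Real.sin (((m : ℝ) + 1) * π * _))]
    rw [this, if_pos rfl]
    ring
  have h := hasSum_integral_sine_series (fun n => 2 * a n) ha2 _ hcont _ hbd
  simp_rw [hcoef] at h
  simpa only [pow_two, mul_assoc] using h

/-! ### Spectral coefficients of the kernel -/

/-- The decay factor `e^{-π²(n+1)²u}` of the `n`-th mode, extended by `0` to `u ≤ 0`. -/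
noncomputable def modeDecay (n : ℕ) (u : ℝ) : ℝ :=
  if 0 < u then Real.exp (-(π ^ 2) * ((n : ℝ) + 1) ^ 2 * u) else 0

/-- The `n`-th sine coefficient (up to the factor `2`) of `z ↦ G (t - r) x z - G (s - r) y z`. -/
noncomputable def diffCoeff (s t x y : ℝ) (n : ℕ) (r : ℝ) : ℝ :=
  modeDecay n (t - r) * Real.sin (((n : ℝ) + 1) * π * x)
    - modeDecay n (s - r) * Real.sin (((n : ℝ) + 1) * π * y)

lemma modeDecay_nonneg (n : ℕ) (u : ℝ) : 0 ≤ modeDecay n u := by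
  unfold modeDecay
  split_ifs <;> positivity

lemma summable_modeDecay (u : ℝ) : Summable fun n => modeDecay n u := by
  unfold modeDecay
  split_ifs with hu
  · have hs : Summable fun n : ℕ => Real.exp ((n : ℝ) * (-(π ^ 2 * u))) :=
      Real.summable_exp_nat_mul_iff.mpr (by have := Real.pi_pos; simp; positivity)
    refine Summable.of_nonneg_of_le (fun n => (Real.exp_pos _).le) (fun n => ?_) hs
    apply Real.exp_le_exp.mpr
    have h1 : (n : ℝ) ≤ ((n : ℝ) + 1) ^ 2 := by nlinarith [(Nat.cast_nonneg n : (0 : ℝ) ≤ n)]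
    have h2 : 0 ≤ π ^ 2 * u := by positivity
    nlinarith [mul_le_mul_of_nonneg_right h1 h2]
  · exact summable_zero

lemma summable_abs_modeDecay_mul_sin (u x : ℝ) :
    Summable fun n : ℕ => |modeDecay n u * Real.sin (((n : ℝ) + 1) * π * x)| := by
  refine Summable.of_nonneg_of_le (fun n => abs_nonneg _) (fun n => ?_) (summable_modeDecay u)
  rw [abs_mul, abs_of_nonneg (modeDecay_nonneg n u)]
  exact mul_le_of_le_one_right (modeDecay_nonneg n u) (Real.abs_sin_le_one _)

lemma summable_abs_diffCoeff (s t x y r : ℝ) : Summable fun n => |diffCoeff s t x y n r| :=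
  Summable.of_nonneg_of_le (fun _ => abs_nonneg _) (fun _ => abs_sub _ _)
    ((summable_abs_modeDecay_mul_sin (t - r) x).add (summable_abs_modeDecay_mul_sin (s - r) y))

lemma G_eq_tsum (u x z : ℝ) :
    G u x z = ∑' n : ℕ, 2 * (modeDecay n u * Real.sin (((n : ℝ) + 1) * π * x))
      * Real.sin (((n : ℝ) + 1) * π * z) := by
  unfold G modeDecay
  split_ifs
  · exact tsum_congr fun n => by ring
  · simp

lemma summable_G_term (u x z : ℝ) :
    Summable fun n : ℕ => 2 * (modeDecay n u * Real.sin (((n : ℝ) + 1) * π * x))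
      * Real.sin (((n : ℝ) + 1) * π * z) := by
  refine Summable.of_norm_bounded ((summable_abs_modeDecay_mul_sin u x).mul_left 2) fun n => ?_
  rw [Real.norm_eq_abs, abs_mul, abs_mul, abs_two]
  exact mul_le_of_le_one_right (by positivity) (Real.abs_sin_le_one _)

lemma G_sub_eq_tsum (s t x y r z : ℝ) :
    G (t - r) x z - G (s - r) y z
      = ∑' n : ℕ, 2 * diffCoeff s t x y n r * Real.sin (((n : ℝ) + 1) * π * z) := by
  rw [G_eq_tsum, G_eq_tsum, ← (summable_G_term _ _ _).tsum_sub (summable_G_term _ _ _)]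
  exact tsum_congr fun n => by unfold diffCoeff; ring

lemma hasSum_diffCoeff_sq (s t x y r : ℝ) :
    HasSum (fun n => 2 * diffCoeff s t x y n r ^ 2)
      (∫ z in Set.Icc (0 : ℝ) 1, (G (t - r) x z - G (s - r) y z) ^ 2) := by
  rw [integral_Icc_eq_integral_Ioc, ← intervalIntegral.integral_of_le zero_le_one]
  simp_rw [G_sub_eq_tsum]
  exact hasSum_sq_sine_series _ (summable_abs_diffCoeff s t x y r)

lemma measurable_diffCoeff (s t x y : ℝ) (n : ℕ) : Measurable (diffCoeff s t x y n) := by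
  have h : Measurable (modeDecay n) :=
    Measurable.ite measurableSet_Ioi (by fun_prop) measurable_const
  unfold diffCoeff
  fun_prop

/-! ### Bounds for a single mode -/

/-- The common majorant of a single mode: its sum over `n` is of order `δ`. -/
noncomputable def modeMin (δ : ℝ) (n : ℕ) : ℝ := min (1 / ((n : ℝ) + 1) ^ 2) (δ ^ 2)

lemma modeMin_nonneg (δ : ℝ) (n : ℕ) : 0 ≤ modeMin δ n :=
  le_min (by positivity) (by positivity)

/-- With `f u = u / (1 + u)`, each `modeMin δ n` is at most `4 δ (f ((n + 1) δ) - f (n δ))`,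
and the right-hand sides telescope. -/
lemma sum_modeMin_le (δ : ℝ) (hδ : 0 ≤ δ) (N : ℕ) :
    ∑ n ∈ Finset.range N, modeMin δ n ≤ 4 * δ := by
  have key : ∀ n : ℕ, modeMin δ n
      ≤ 4 * δ * (((n + 1 : ℕ) : ℝ) * δ / (1 + ((n + 1 : ℕ) : ℝ) * δ)
        - (n : ℝ) * δ / (1 + (n : ℝ) * δ)) := by
    intro n
    have hn : (0 : ℝ) ≤ n := Nat.cast_nonneg n
    set u : ℝ := ((n : ℝ) + 1) * δ with hu
    have hu0 : 0 ≤ u := by positivity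
    have hw : 0 ≤ (n : ℝ) * δ := by positivity
    have hwu : (n : ℝ) * δ ≤ u := by rw [hu]; nlinarith
    have e : (((n + 1 : ℕ) : ℝ) * δ / (1 + ((n + 1 : ℕ) : ℝ) * δ)
        - (n : ℝ) * δ / (1 + (n : ℝ) * δ)) = δ / ((1 + u) * (1 + n * δ)) := by
      push_cast
      rw [← hu, div_sub_div _ _ (by positivity) (by positivity)]
      congr 1
      rw [hu]; ring
    rw [e]
    have h1 : 4 * δ * (δ / (1 + u) ^ 2) ≤ 4 * δ * (δ / ((1 + u) * (1 + n * δ))) := by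
      gcongr
      nlinarith
    refine le_trans ?_ h1
    rw [← mul_div_assoc, le_div_iff₀ (by positivity)]
    rcases le_total u 1 with h | h
    · calc modeMin δ n * (1 + u) ^ 2 ≤ δ ^ 2 * 2 ^ 2 := by
            gcongr
            · exact min_le_right _ _
            · linarith
        _ = 4 * δ * δ := by ring
    · calc modeMin δ n * (1 + u) ^ 2 ≤ 1 / ((n : ℝ) + 1) ^ 2 * (2 * u) ^ 2 := by
            gcongr
            · exact min_le_left _ _
            · linarith
        _ = 4 * δ * δ := by rw [hu]; field_simp; ring
  calc ∑ n ∈ Finset.range N, modeMin δ n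
      ≤ ∑ n ∈ Finset.range N, 4 * δ * (((n + 1 : ℕ) : ℝ) * δ / (1 + ((n + 1 : ℕ) : ℝ) * δ)
        - (n : ℝ) * δ / (1 + (n : ℝ) * δ)) := Finset.sum_le_sum fun n _ => key n
    _ = 4 * δ * ((N : ℝ) * δ / (1 + (N : ℝ) * δ)) := by
      rw [← Finset.mul_sum, Finset.sum_range_sub (fun n : ℕ => (n : ℝ) * δ / (1 + (n : ℝ) * δ))]
      simp
    _ ≤ 4 * δ * 1 := by
      gcongr
      rw [div_le_one (by positivity)]
      linarith
    _ = 4 * δ := mul_one _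

lemma lintegral_exp_Iic (l c : ℝ) (hl : 0 < l) :
    ∫⁻ r in Set.Iic c, ENNReal.ofReal (Real.exp (2 * l * (r - c)))
      = ENNReal.ofReal (1 / (2 * l)) := by
  have h2 : (0 : ℝ) < 2 * l := by positivity
  have e : ∀ r : ℝ, Real.exp (2 * l * (r - c))
      = Real.exp (-(2 * l * c)) * Real.exp (2 * l * r) := by
    intro r; rw [← Real.exp_add]; ring_nf
  simp_rw [e]
  rw [← ofReal_integral_eq_lintegral_ofReal
    ((integrableOn_exp_mul_Iic h2 c).const_mul _)
    (Filter.Eventually.of_forall fun r => by positivity),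
    integral_const_mul, integral_exp_mul_Iic h2, ← mul_div_assoc, ← Real.exp_add]
  simp

/-- Controls a mode on the slab `s ≤ r ≤ t`, where the second kernel vanishes. -/
lemma lintegral_exp_Icc_le (l s t : ℝ) (hl : 0 < l) :
    ∫⁻ r in Set.Icc s t, ENNReal.ofReal (Real.exp (2 * l * (r - t)))
      ≤ ENNReal.ofReal (min (1 / (2 * l)) (t - s)) := by
  rw [ENNReal.ofReal_min]
  refine le_min ?_ ?_
  · rw [← lintegral_exp_Iic l t hl]
    exact lintegral_mono_set Set.Icc_subset_Iic_self
  · calc ∫⁻ r in Set.Icc s t, ENNReal.ofReal (Real.exp (2 * l * (r - t)))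
        ≤ ∫⁻ r in Set.Icc s t, 1 := by
          refine setLIntegral_mono measurable_const fun r hr => ?_
          rw [ENNReal.ofReal_le_one, Real.exp_le_one_iff]
          have := hr.2
          nlinarith
      _ = ENNReal.ofReal (t - s) := by simp

/-- Bounds the factor of `e^{-2λ(s-r)}` in the squared mode when `r < s`; here `X` and `Y` are the
values of the sine at the two space points. -/
lemma mode_bracket_le (l τ h X Y : ℝ) (hl : 0 < l) (hτ : 0 ≤ τ)
    (hXY : (X - Y) ^ 2 ≤ l * h ^ 2) (hX : |X| ≤ 1) (hY : |Y| ≤ 1) :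
    (Real.exp (-(l * τ)) * X - Y) ^ 2 ≤ 2 * min 1 (l * τ) + 2 * min 4 (l * h ^ 2) := by
  set E := Real.exp (-(l * τ))
  have hE0 : 0 < E := Real.exp_pos _
  have hE1 : E ≤ 1 := Real.exp_le_one_iff.mpr (by nlinarith)
  have hE2 : 1 - E ≤ l * τ := by have := Real.add_one_le_exp (-(l * τ)); linarith
  have hX2 : X ^ 2 ≤ 1 := (sq_le_one_iff_abs_le_one X).mpr hX
  have hY2 : Y ^ 2 ≤ 1 := (sq_le_one_iff_abs_le_one Y).mpr hY
  have h1 : ((1 - E) * X) ^ 2 ≤ min 1 (l * τ) := by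
    have : ((1 - E) * X) ^ 2 ≤ 1 - E := by
      rw [mul_pow]
      nlinarith [mul_le_mul_of_nonneg_left hX2 (sq_nonneg (1 - E))]
    exact le_min (by linarith) (by linarith)
  have h2 : (X - Y) ^ 2 ≤ min 4 (l * h ^ 2) := le_min (by nlinarith [sq_nonneg (X + Y)]) hXY
  nlinarith [sq_nonneg ((1 - E) * X + (X - Y))]

lemma lintegral_diffCoeff_sq_le (s t x y : ℝ) (hst : s ≤ t) (n : ℕ) :
    ∫⁻ r in Set.Icc 0 t, ENNReal.ofReal (2 * diffCoeff s t x y n r ^ 2)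
      ≤ ENNReal.ofReal (4 * modeMin (√(t - s)) n + 2 * modeMin (|x - y|) n) := by
  set l : ℝ := π ^ 2 * ((n : ℝ) + 1) ^ 2 with hl
  have hl0 : 0 < l := by positivity
  have hτ : 0 ≤ t - s := sub_nonneg.mpr hst
  set K : ℝ := 2 * min 1 (l * (t - s)) + 2 * min 4 (l * |x - y| ^ 2) with hK
  have hK0 : 0 ≤ K := by
    have h1 : 0 ≤ min 1 (l * (t - s)) := le_min (by norm_num) (by positivity)
    have h2 : 0 ≤ min 4 (l * |x - y| ^ 2) := le_min (by norm_num) (by positivity)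
    positivity
  have hexp : ∀ u, 0 < u → modeDecay n u = Real.exp (-(l * u)) := by
    intro u hu
    simp only [modeDecay, hu, if_true, hl]
    ring_nf
  -- Before time `s` both kernels contribute; between `s` and `t` only the first one does.
  have hA : ∀ r, r ∈ Set.Iio s → 2 * diffCoeff s t x y n r ^ 2
      ≤ 2 * K * Real.exp (2 * l * (r - s)) := by
    intro r hr
    have hr' : r < s := hr
    have hXY : (Real.sin (((n : ℝ) + 1) * π * x) - Real.sin (((n : ℝ) + 1) * π * y)) ^ 2
        ≤ l * |x - y| ^ 2 := by
      have h := Real.abs_sin_sub_sin_le (((n : ℝ) + 1) * π * x) (((n : ℝ) + 1) * π * y)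
      calc _ ≤ (((n : ℝ) + 1) * π * x - ((n : ℝ) + 1) * π * y) ^ 2 := sq_le_sq.mpr h
        _ = l * |x - y| ^ 2 := by rw [sq_abs, hl]; ring
    have hb := mode_bracket_le l (t - s) |x - y| _ _ hl0 hτ hXY
      (Real.abs_sin_le_one _) (Real.abs_sin_le_one _)
    have e : diffCoeff s t x y n r ^ 2 = Real.exp (2 * l * (r - s))
        * (Real.exp (-(l * (t - s))) * Real.sin (((n : ℝ) + 1) * π * x)
          - Real.sin (((n : ℝ) + 1) * π * y)) ^ 2 := by
      have e1 : Real.exp (-(l * (t - r)))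
          = Real.exp (-(l * (s - r))) * Real.exp (-(l * (t - s))) := by
        rw [← Real.exp_add]; ring_nf
      have e2 : Real.exp (2 * l * (r - s)) = Real.exp (-(l * (s - r))) ^ 2 := by
        rw [← Real.exp_nat_mul]; push_cast; ring_nf
      unfold diffCoeff
      rw [hexp _ (by linarith), hexp _ (by linarith), e1, e2]
      ring
    rw [e]
    have := mul_le_mul_of_nonneg_left hb (Real.exp_pos (2 * l * (r - s))).le
    linarith
  have hB : ∀ r, r ∈ Set.Icc s t → 2 * diffCoeff s t x y n r ^ 2
      ≤ 2 * Real.exp (2 * l * (r - t)) := by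
    intro r hr
    have h0 : modeDecay n (s - r) = 0 := by
      simp only [modeDecay]; rw [if_neg]; linarith [hr.1]
    have h1 : modeDecay n (t - r) ≤ Real.exp (l * (r - t)) := by
      by_cases h : 0 < t - r
      · rw [hexp _ h]; apply le_of_eq; ring_nf
      · simp only [modeDecay, h, if_false]; positivity
    have e2 : Real.exp (2 * l * (r - t)) = Real.exp (l * (r - t)) ^ 2 := by
      rw [← Real.exp_nat_mul]; push_cast; ring_nf
    unfold diffCoeff
    rw [h0, zero_mul, sub_zero, e2, mul_pow]
    have h2 : modeDecay n (t - r) ^ 2 ≤ Real.exp (l * (r - t)) ^ 2 :=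
      pow_le_pow_left₀ (modeDecay_nonneg _ _) h1 2
    have h3 := Real.sin_sq_le_one (((n : ℝ) + 1) * π * x)
    nlinarith [mul_le_mul_of_nonneg_left h3 (sq_nonneg (modeDecay n (t - r)))]
  -- Both `1 / λ` and `4 / λ` are at most `1 / (n + 1)²`, since `π² ≥ 4`.
  have hfinal : 2 * K * (1 / (2 * l)) + 2 * min (1 / (2 * l)) (t - s)
      ≤ 4 * modeMin (√(t - s)) n + 2 * modeMin (|x - y|) n := by
    have hp : 4 * ((n : ℝ) + 1) ^ 2 ≤ l := by
      have : (4 : ℝ) ≤ π ^ 2 := by nlinarith [Real.pi_gt_three]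
      rw [hl]; gcongr
    have h4 : 4 / l ≤ 1 / ((n : ℝ) + 1) ^ 2 := by
      rw [div_le_div_iff₀ hl0 (by positivity)]; linarith
    have h1 : 1 / l ≤ 4 / l := by gcongr; norm_num
    have h12 : 1 / (2 * l) ≤ 1 / l := by gcongr; linarith
    have i1 : min 1 (l * (t - s)) / l ≤ modeMin (√(t - s)) n := by
      unfold modeMin
      rw [Real.sq_sqrt hτ]
      refine le_min ?_ ?_
      · exact (div_le_div_of_nonneg_right (min_le_left _ _) hl0.le).trans (h1.trans h4)
      · rw [div_le_iff₀ hl0, mul_comm (t - s)]; exact min_le_right _ _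
    have i2 : min 4 (l * |x - y| ^ 2) / l ≤ modeMin (|x - y|) n := by
      refine le_min ?_ ?_
      · exact (div_le_div_of_nonneg_right (min_le_left _ _) hl0.le).trans h4
      · rw [div_le_iff₀ hl0, mul_comm (|x - y| ^ 2)]; exact min_le_right _ _
    have i3 : min (1 / (2 * l)) (t - s) ≤ modeMin (√(t - s)) n := by
      unfold modeMin
      rw [Real.sq_sqrt hτ]
      exact min_le_min_right _ (h12.trans (h1.trans h4))
    have e : 2 * K * (1 / (2 * l))
        = 2 * (min 1 (l * (t - s)) / l) + 2 * (min 4 (l * |x - y| ^ 2) / l) := by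
      rw [hK]; field_simp
    linarith
  have hcov : Set.Icc 0 t ⊆ Set.Iio s ∪ Set.Icc s t := by
    intro r hr
    rcases lt_or_ge r s with h | h
    · exact Or.inl h
    · exact Or.inr ⟨h, hr.2⟩
  have hC : ∀ c d : ℝ, 0 ≤ c → ∀ S : Set ℝ,
      ∫⁻ r in S, ENNReal.ofReal (c * Real.exp (2 * l * (r - d)))
        = ENNReal.ofReal c * ∫⁻ r in S, ENNReal.ofReal (Real.exp (2 * l * (r - d))) := by
    intro c d hc S
    simp_rw [ENNReal.ofReal_mul hc]
    exact lintegral_const_mul _ (by fun_prop)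
  calc ∫⁻ r in Set.Icc 0 t, ENNReal.ofReal (2 * diffCoeff s t x y n r ^ 2)
      ≤ ∫⁻ r in Set.Iio s ∪ Set.Icc s t, ENNReal.ofReal (2 * diffCoeff s t x y n r ^ 2) :=
        lintegral_mono_set hcov
    _ ≤ (∫⁻ r in Set.Iio s, ENNReal.ofReal (2 * diffCoeff s t x y n r ^ 2))
        + ∫⁻ r in Set.Icc s t, ENNReal.ofReal (2 * diffCoeff s t x y n r ^ 2) :=
        lintegral_union_le _ _ _
    _ ≤ (∫⁻ r in Set.Iio s, ENNReal.ofReal (2 * K * Real.exp (2 * l * (r - s))))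
        + ∫⁻ r in Set.Icc s t, ENNReal.ofReal (2 * Real.exp (2 * l * (r - t))) :=
        add_le_add
          (setLIntegral_mono (by fun_prop) fun r hr => ENNReal.ofReal_le_ofReal (hA r hr))
          (setLIntegral_mono (by fun_prop) fun r hr => ENNReal.ofReal_le_ofReal (hB r hr))
    _ ≤ (∫⁻ r in Set.Iic s, ENNReal.ofReal (2 * K * Real.exp (2 * l * (r - s))))
        + ∫⁻ r in Set.Icc s t, ENNReal.ofReal (2 * Real.exp (2 * l * (r - t))) := by
        gcongr
        exact Set.Iio_subset_Iic_self
    _ ≤ ENNReal.ofReal (2 * K) * ENNReal.ofReal (1 / (2 * l))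
        + ENNReal.ofReal 2 * ENNReal.ofReal (min (1 / (2 * l)) (t - s)) := by
        rw [hC _ _ (by positivity), hC _ _ (by norm_num), lintegral_exp_Iic _ _ hl0]
        gcongr
        exact lintegral_exp_Icc_le l s t hl0
    _ = ENNReal.ofReal (2 * K * (1 / (2 * l)) + 2 * min (1 / (2 * l)) (t - s)) := by
        have hm : 0 ≤ min (1 / (2 * l)) (t - s) := le_min (by positivity) hτ
        rw [← ENNReal.ofReal_mul (by positivity), ← ENNReal.ofReal_mul (by norm_num),
          ← ENNReal.ofReal_add (by positivity) (by positivity)]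
    _ ≤ _ := ENNReal.ofReal_le_ofReal hfinal

/-! ### Summation over the modes -/

/-- There is `C > 0` such that for all `0 ≤ s ≤ t` and `x, y ∈ [0,1]`,
`∫₀ᵗ∫₀¹ (G_{t−r}(x,z) − G_{s−r}(y,z))² dz dr ≤ C (|t−s|^{1/4} + |x−y|^{1/2})²`. -/
theorem kernel_L2_space_time_modulus :
    ∃ C : ℝ, 0 < C ∧ ∀ s t x y : ℝ, 0 ≤ s → s ≤ t →
      x ∈ Set.Icc (0 : ℝ) 1 → y ∈ Set.Icc (0 : ℝ) 1 →
      (∫ r in Set.Icc (0 : ℝ) t, ∫ z in Set.Icc (0 : ℝ) 1,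
          (G (t - r) x z - G (s - r) y z) ^ 2)
        ≤ C * (|t - s| ^ ((1 : ℝ) / 4) + |x - y| ^ ((1 : ℝ) / 2)) ^ 2 := by
  refine ⟨16, by norm_num, ?_⟩
  intro s t x y _ hst _ _
  have hτ : 0 ≤ t - s := sub_nonneg.mpr hst
  set p : ℝ := |t - s| ^ ((1 : ℝ) / 4) with hp
  set q : ℝ := |x - y| ^ ((1 : ℝ) / 2) with hq
  have hp0 : 0 ≤ p := by positivity
  have hq0 : 0 ≤ q := by positivity
  have hp2 : p ^ 2 = √(t - s) := by
    rw [hp, abs_of_nonneg hτ, ← Real.rpow_natCast, ← Real.rpow_mul hτ, Real.sqrt_eq_rpow]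
    norm_num
  have hq2 : q ^ 2 = |x - y| := by
    rw [hq, ← Real.rpow_natCast, ← Real.rpow_mul (abs_nonneg _)]
    norm_num
  have hmain : ‖∫ r in Set.Icc (0 : ℝ) t, ∫ z in Set.Icc (0 : ℝ) 1,
      (G (t - r) x z - G (s - r) y z) ^ 2‖ₑ
        ≤ ENNReal.ofReal (16 * √(t - s) + 8 * |x - y|) := by
    calc _ ≤ ∫⁻ r in Set.Icc (0 : ℝ) t, ‖∫ z in Set.Icc (0 : ℝ) 1,
          (G (t - r) x z - G (s - r) y z) ^ 2‖ₑ := enorm_integral_le_lintegral_enorm _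
      _ = ∫⁻ r in Set.Icc (0 : ℝ) t, ∑' n, ENNReal.ofReal (2 * diffCoeff s t x y n r ^ 2) := by
          refine lintegral_congr fun r => ?_
          have h := hasSum_diffCoeff_sq s t x y r
          rw [← h.tsum_eq, Real.enorm_of_nonneg (tsum_nonneg fun n => by positivity),
            ENNReal.ofReal_tsum_of_nonneg (fun n => by positivity) h.summable]
      _ = ∑' n, ∫⁻ r in Set.Icc (0 : ℝ) t, ENNReal.ofReal (2 * diffCoeff s t x y n r ^ 2) := by
          refine lintegral_tsum fun n => ?_
          have := measurable_diffCoeff s t x y n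
          fun_prop
      _ ≤ ∑' n, ENNReal.ofReal (4 * modeMin (√(t - s)) n + 2 * modeMin (|x - y|) n) :=
          ENNReal.tsum_le_tsum fun n => lintegral_diffCoeff_sq_le s t x y hst n
      _ ≤ _ := by
          refine ENNReal.tsum_le_of_sum_range_le fun N => ?_
          rw [← ENNReal.ofReal_sum_of_nonneg fun n _ => by
            have := modeMin_nonneg (√(t - s)) n
            have := modeMin_nonneg (|x - y|) n
            positivity]
          apply ENNReal.ofReal_le_ofReal
          rw [Finset.sum_add_distrib, ← Finset.mul_sum, ← Finset.mul_sum]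
          linarith [sum_modeMin_le (√(t - s)) (Real.sqrt_nonneg _) N,
            sum_modeMin_le (|x - y|) (abs_nonneg _) N]
  rw [Real.enorm_eq_ofReal_abs, ENNReal.ofReal_le_ofReal_iff (by positivity)] at hmain
  refine (le_abs_self _).trans (hmain.trans ?_)
  rw [← hp2, ← hq2]
  nlinarith [mul_nonneg hp0 hq0, sq_nonneg q]
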